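/- Fix integers n > m ≥ 1 and j with 0 ≤ j ≤ n−1, and set θ_j = jπ/n. Let ν be the product measure on (ℝ × ℝ)^{m+1} whose k-th factor is N(0, (1/2)binom(m,k)) ⊗ N(0, (1/2)binom(m,k)), governing the coefficients ((a_k, b_k))_{k=0}^m. For every ε₀ > 0 there exists ε₁ > 0 such that for all 0 < ε ≤ ε₁, the expected number of real solutions r of the equation ε r^n + 2 Σ_{k=0}^m (−1)^j (a_k cos(kθ_j) − b_k sin(kθ_j)) r^k = 0, i.e. ∫ (cardinality of the solution set in ℝ) dν, is at least √m − ε₀. -/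

import Mathlib

open MeasureTheory ProbabilityTheory
open scoped NNReal

/-!
For a fixed phase, `a_k cos φ_k - b_k sin φ_k` has the law of `a_k`, so at `ε = 0` the equation is
that of a Kostlan random polynomial `p` of degree `m`. Its values at `tan s` and `tan t` form a
Gaussian pair of correlation `cos (t - s) ^ m`, and by Sheppard's formula they have opposite signs
with probability `arccos (cos (t - s) ^ m) / π`. Over the tangents of `M + 1` equidistant angles the
expected number of sign changes of `p` is therefore `M * arccos (cos (π / (M + 1)) ^ m) / π`, which
tends to `√m`. For a fixed grid strict sign changes survive a small perturbation of `p`, and each of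
them forces a zero, which bounds the expected number of zeros from below.
-/

open Filter Topology Polynomial

/-! ### Sheppard's formula -/

theorem gaussianPDF_mul_gaussianPDF_polarCoord_symm (p : ℝ × ℝ) :
    gaussianPDF 0 1 (polarCoord.symm p).1 * gaussianPDF 0 1 (polarCoord.symm p).2 =
      gaussianPDF 0 1 p.1 * gaussianPDF 0 1 0 := by
  simp only [gaussianPDF, gaussianPDFReal, polarCoord_symm_apply]
  rw [← ENNReal.ofReal_mul (by positivity), ← ENNReal.ofReal_mul (by positivity)]
  congr 1
  rw [mul_mul_mul_comm, ← Real.exp_add, mul_mul_mul_comm, ← Real.exp_add]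
  congr 2
  simp only [NNReal.coe_one, sub_zero]
  linear_combination (-p.1 ^ 2 / 2) * Real.sin_sq_add_cos_sq p.2

theorem lintegral_gaussianReal_prod_eq_polar {f : ℝ × ℝ → ENNReal} (hf : Measurable f) :
    ∫⁻ p, f p ∂((gaussianReal 0 1).prod (gaussianReal 0 1)) =
      ∫⁻ p in Set.Ioi (0 : ℝ) ×ˢ Set.Ioo (-Real.pi) Real.pi,
        ENNReal.ofReal p.1 * (gaussianPDF 0 1 p.1 * gaussianPDF 0 1 0) *
          f (polarCoord.symm p) := by
  rw [gaussianReal_of_var_ne_zero 0 one_ne_zero,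
    prod_withDensity (measurable_gaussianPDF 0 1) (measurable_gaussianPDF 0 1),
    lintegral_withDensity_eq_lintegral_mul _ (by fun_prop) hf, ← Measure.volume_eq_prod,
    ← lintegral_comp_polarCoord_symm, polarCoord_target]
  simp only [Pi.mul_apply, gaussianPDF_mul_gaussianPDF_polarCoord_symm, smul_eq_mul, mul_assoc]

theorem gaussianReal_prod_cone {S : Set (ℝ × ℝ)} (hS : MeasurableSet S)
    (hcone : ∀ r : ℝ, 0 < r → ∀ p ∈ S, r • p ∈ S) :
    (gaussianReal 0 1).prod (gaussianReal 0 1) S =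
      volume ({θ : ℝ | (Real.cos θ, Real.sin θ) ∈ S} ∩ Set.Ioo (-Real.pi) Real.pi) /
        ENNReal.ofReal (2 * Real.pi) := by
  -- The radial factor `κ` is the same for every cone, so the full plane determines it.
  set radial : ℝ → ENNReal := fun r => ENNReal.ofReal r * (gaussianPDF 0 1 r * gaussianPDF 0 1 0)
  set κ : ENNReal := ∫⁻ r in Set.Ioi (0 : ℝ), radial r
  have factor : ∀ T : Set (ℝ × ℝ), MeasurableSet T → (∀ r : ℝ, 0 < r → ∀ p ∈ T, r • p ∈ T) →
      (gaussianReal 0 1).prod (gaussianReal 0 1) T =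
        κ * volume ({θ : ℝ | (Real.cos θ, Real.sin θ) ∈ T} ∩ Set.Ioo (-Real.pi) Real.pi) := by
    intro T hT hTcone
    have hangle : MeasurableSet {θ : ℝ | (Real.cos θ, Real.sin θ) ∈ T} :=
      hT.preimage (by fun_prop)
    rw [← lintegral_indicator_one hT,
      lintegral_gaussianReal_prod_eq_polar (measurable_one.indicator hT)]
    calc _ = ∫⁻ p in Set.Ioi (0 : ℝ) ×ˢ Set.Ioo (-Real.pi) Real.pi,
          radial p.1 * {θ : ℝ | (Real.cos θ, Real.sin θ) ∈ T}.indicator 1 p.2 := by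
          refine setLIntegral_congr_fun (measurableSet_Ioi.prod measurableSet_Ioo) fun p hp => ?_
          have hr : 0 < p.1 := hp.1
          have hpolar : polarCoord.symm p = p.1 • (Real.cos p.2, Real.sin p.2) := rfl
          have hmem : polarCoord.symm p ∈ T ↔ (Real.cos p.2, Real.sin p.2) ∈ T := by
            refine ⟨fun h => ?_, fun h => hpolar ▸ hTcone _ hr _ h⟩
            simpa only [hpolar, inv_smul_smul₀ hr.ne'] using hTcone _ (inv_pos.2 hr) _ h
          exact congrArg _ (Set.indicator_eq_indicator hmem rfl)
      _ = _ := by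
          rw [Measure.volume_eq_prod, ← Measure.prod_restrict,
            lintegral_prod_mul (by fun_prop) (measurable_one.indicator hangle).aemeasurable,
            lintegral_indicator_one hangle, Measure.restrict_apply hangle]
  have htotal : κ * ENNReal.ofReal (2 * Real.pi) = 1 := by
    have h := factor Set.univ MeasurableSet.univ fun _ _ _ _ => Set.mem_univ _
    simp only [measure_univ, Set.mem_univ, Set.ofPred_true, Set.univ_inter, Real.volume_Ioo] at h
    rw [h, sub_neg_eq_add, two_mul]
  rw [factor S hS hcone, mul_comm, ENNReal.eq_inv_of_mul_eq_one_left htotal, div_eq_mul_inv]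

theorem measurableSet_sector (α : ℝ) :
    MeasurableSet {p : ℝ × ℝ | 0 < p.1 ∧ Real.cos α * p.1 + Real.sin α * p.2 < 0} :=
  (measurableSet_lt measurable_const measurable_fst).inter
    (measurableSet_lt ((measurable_fst.const_mul _).add (measurable_snd.const_mul _))
      measurable_const)

theorem cos_pos_and_cos_sub_neg_iff {α θ : ℝ} (h0 : 0 ≤ α) (hπ : α ≤ Real.pi)
    (hθ : θ ∈ Set.Ioo (-Real.pi) Real.pi) :
    0 < Real.cos θ ∧ Real.cos (θ - α) < 0 ↔
      θ ∈ Set.Ioo (-(Real.pi / 2)) (α - Real.pi / 2) := by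
  constructor
  · rintro ⟨hcos, hcos'⟩
    have hθ' : |θ| < Real.pi / 2 := by
      by_contra! h
      exact hcos.not_ge (Real.cos_abs θ ▸
        Real.cos_nonpos_of_pi_div_two_le_of_le h (by linarith [abs_lt.2 hθ, Real.pi_pos]))
    rw [abs_lt] at hθ'
    refine ⟨hθ'.1, ?_⟩
    by_contra! h
    exact hcos'.not_ge (Real.cos_nonneg_of_neg_pi_div_two_le_of_le (by linarith) (by linarith))
  · rintro ⟨hl, hr⟩
    refine ⟨Real.cos_pos_of_mem_Ioo ⟨hl, by linarith⟩, ?_⟩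
    rw [← Real.cos_neg]
    exact Real.cos_neg_of_pi_div_two_lt_of_lt (by linarith) (by linarith)

theorem gaussianReal_prod_sector {α : ℝ} (h0 : 0 ≤ α) (hπ : α ≤ Real.pi) :
    (gaussianReal 0 1).prod (gaussianReal 0 1)
        {p | 0 < p.1 ∧ Real.cos α * p.1 + Real.sin α * p.2 < 0} =
      ENNReal.ofReal (α / (2 * Real.pi)) := by
  have hangle : {θ : ℝ | (Real.cos θ, Real.sin θ) ∈
        {p : ℝ × ℝ | 0 < p.1 ∧ Real.cos α * p.1 + Real.sin α * p.2 < 0}} ∩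
      Set.Ioo (-Real.pi) Real.pi = Set.Ioo (-(Real.pi / 2)) (α - Real.pi / 2) := by
    ext θ
    rw [Set.mem_inter_iff, Set.mem_ofPred_eq, Set.mem_ofPred_eq, mul_comm, mul_comm (Real.sin α),
      ← Real.cos_sub]
    refine ⟨fun h => (cos_pos_and_cos_sub_neg_iff h0 hπ h.2).1 h.1, fun h => ?_⟩
    have hθ : θ ∈ Set.Ioo (-Real.pi) Real.pi :=
      ⟨by linarith [h.1, Real.pi_pos], by linarith [h.2, Real.pi_pos]⟩
    exact ⟨(cos_pos_and_cos_sub_neg_iff h0 hπ hθ).2 h, hθ⟩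
  rw [gaussianReal_prod_cone (measurableSet_sector α), hangle, Real.volume_Ioo,
    ← ENNReal.ofReal_div_of_pos (by positivity)]
  · congr 2
    ring
  · rintro r hr p ⟨hp, hp'⟩
    refine ⟨mul_pos hr hp, ?_⟩
    simpa only [Prod.smul_fst, Prod.smul_snd, smul_eq_mul, mul_left_comm _ r, ← mul_add]
      using mul_neg_of_pos_of_neg hr hp'

theorem gaussianReal_prod_mul_neg {α : ℝ} (h0 : 0 ≤ α) (hπ : α ≤ Real.pi) :
    (gaussianReal 0 1).prod (gaussianReal 0 1)
      {p | p.1 * (Real.cos α * p.1 + Real.sin α * p.2) < 0} = ENNReal.ofReal (α / Real.pi) := by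
  set A : Set (ℝ × ℝ) := {p | 0 < p.1 ∧ Real.cos α * p.1 + Real.sin α * p.2 < 0} with hA
  have hneg : MeasurePreserving (fun x : ℝ => -x) (gaussianReal 0 1) (gaussianReal 0 1) :=
    ⟨measurable_neg, by rw [gaussianReal_map_neg, neg_zero]⟩
  have hunion : {p : ℝ × ℝ | p.1 * (Real.cos α * p.1 + Real.sin α * p.2) < 0} =
      A ∪ Prod.map (fun x => -x) (fun x => -x) ⁻¹' A := by
    ext p
    have : Real.cos α * -p.1 + Real.sin α * -p.2 =
      -(Real.cos α * p.1 + Real.sin α * p.2) := by ring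
    simp only [hA, Set.mem_union, Set.mem_preimage, Set.mem_ofPred_eq, Prod.map_fst, Prod.map_snd,
      mul_neg_iff, this, Left.neg_pos_iff, Left.neg_neg_iff]
  have hdisj : Disjoint A (Prod.map (fun x => -x) (fun x => -x) ⁻¹' A) := by
    rw [Set.disjoint_left]
    rintro p ⟨hp, -⟩ ⟨hp', -⟩
    exact hp.not_gt (neg_pos.1 hp')
  rw [hunion, measure_union hdisj ((measurableSet_sector α).preimage (by fun_prop)),
    (hneg.prod hneg).measure_preimage (measurableSet_sector α).nullMeasurableSet,
    gaussianReal_prod_sector h0 hπ, ← ENNReal.ofReal_add (by positivity) (by positivity)]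
  congr 1
  ring

theorem isGaussian_ext_prod_real {μ ν : Measure (ℝ × ℝ)} [IsGaussian μ] [IsGaussian ν]
    (hmean : ∫ p, p ∂μ = ∫ p, p ∂ν) (hfst : Var[Prod.fst; μ] = Var[Prod.fst; ν])
    (hsnd : Var[Prod.snd; μ] = Var[Prod.snd; ν])
    (hcov : cov[Prod.fst, Prod.snd; μ] = cov[Prod.fst, Prod.snd; ν]) : μ = ν := by
  have hcoord : ∀ L : StrongDual ℝ (ℝ × ℝ), L = L (1, 0) • ContinuousLinearMap.fst ℝ ℝ ℝ +
      L (0, 1) • ContinuousLinearMap.snd ℝ ℝ ℝ := by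
    intro L
    ext <;> simp
  have hcov' : cov[Prod.snd, Prod.fst; μ] = cov[Prod.snd, Prod.fst; ν] := by
    rw [covariance_comm, hcov, covariance_comm]
  refine IsGaussian.ext_covarianceBilinDual hmean ?_
  ext L L'
  rw [hcoord L, hcoord L']
  simp only [map_add, map_smul, add_apply, smul_apply,
    covarianceBilinDual_eq_covariance IsGaussian.memLp_two_id, ContinuousLinearMap.coe_fst',
    ContinuousLinearMap.coe_snd', covariance_self measurable_fst.aemeasurable,
    covariance_self measurable_snd.aemeasurable, hfst, hsnd, hcov, hcov']

theorem map_prodMk_eq_of_hasGaussianLaw {Ω Ω' : Type*} [MeasurableSpace Ω] [MeasurableSpace Ω']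
    {P : Measure Ω} {Q : Measure Ω'} {U V : Ω → ℝ} {U' V' : Ω' → ℝ}
    (h : HasGaussianLaw (fun ω => (U ω, V ω)) P) (h' : HasGaussianLaw (fun ω => (U' ω, V' ω)) Q)
    (hU : ∫ ω, U ω ∂P = ∫ ω, U' ω ∂Q) (hV : ∫ ω, V ω ∂P = ∫ ω, V' ω ∂Q)
    (hvarU : Var[U; P] = Var[U'; Q]) (hvarV : Var[V; P] = Var[V'; Q])
    (hcov : cov[U, V; P] = cov[U', V'; Q]) :
    P.map (fun ω => (U ω, V ω)) = Q.map (fun ω => (U' ω, V' ω)) := by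
  have := h.isGaussian_map
  have := h'.isGaussian_map
  apply isGaussian_ext_prod_real
  · rw [integral_map h.aemeasurable (by fun_prop), integral_map h'.aemeasurable (by fun_prop),
      integral_pair h.fst.integrable h.snd.integrable,
      integral_pair h'.fst.integrable h'.snd.integrable, hU, hV]
  · rw [variance_map (by fun_prop) h.aemeasurable, variance_map (by fun_prop) h'.aemeasurable]
    exact hvarU
  · rw [variance_map (by fun_prop) h.aemeasurable, variance_map (by fun_prop) h'.aemeasurable]
    exact hvarV
  · rw [covariance_map (by fun_prop) (by fun_prop) h.aemeasurable,
      covariance_map (by fun_prop) (by fun_prop) h'.aemeasurable]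
    exact hcov

theorem integral_gaussianReal_prod (a b : ℝ) :
    ∫ p, (a * p.1 + b * p.2) ∂((gaussianReal 0 1).prod (gaussianReal 0 1)) = 0 := by
  set γ := (gaussianReal 0 1).prod (gaussianReal 0 1)
  have hid : Integrable id γ := IsGaussian.integrable_id
  have h1 : Integrable (fun p : ℝ × ℝ => a * p.1) γ := hid.fst.const_mul a
  have h2 : Integrable (fun p : ℝ × ℝ => b * p.2) γ := hid.snd.const_mul b
  rw [integral_add h1 h2, integral_const_mul, integral_const_mul, integral_fun_fst fun x => x,
    integral_fun_snd fun x => x, integral_id_gaussianReal, smul_zero, mul_zero, mul_zero, add_zero]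

theorem covariance_gaussianReal_prod (a b c d : ℝ) :
    cov[fun p => a * p.1 + b * p.2, fun p => c * p.1 + d * p.2;
      (gaussianReal 0 1).prod (gaussianReal 0 1)] = a * c + b * d := by
  set γ := (gaussianReal 0 1).prod (gaussianReal 0 1)
  have hid : MemLp id 2 γ := IsGaussian.memLp_two_id
  have h1 : ∀ t : ℝ, MemLp (fun p => t * p.1) 2 γ := fun t => hid.fst.const_mul t
  have h2 : ∀ t : ℝ, MemLp (fun p => t * p.2) 2 γ := fun t => hid.snd.const_mul t
  have hcov : cov[Prod.fst, Prod.snd; γ] = 0 :=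
    covariance_fst_snd_prod (memLp_id_gaussianReal 2) (memLp_id_gaussianReal 2)
  have hfst : Var[Prod.fst; γ] = 1 := by
    rw [← variance_id_map (by fun_prop), measurePreserving_fst.map_eq, variance_id_gaussianReal,
      NNReal.coe_one]
  have hsnd : Var[Prod.snd; γ] = 1 := by
    rw [← variance_id_map (by fun_prop), measurePreserving_snd.map_eq, variance_id_gaussianReal,
      NNReal.coe_one]
  change cov[(fun p => a * p.1) + fun p => b * p.2, (fun p => c * p.1) + fun p => d * p.2; γ] = _
  rw [covariance_add_left (h1 a) (h2 b) ((h1 c).add (h2 d)),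
    covariance_add_right (h1 a) (h1 c) (h2 d), covariance_add_right (h2 b) (h1 c) (h2 d)]
  simp only [covariance_const_mul_left, covariance_const_mul_right,
    covariance_comm Prod.snd Prod.fst, hcov, covariance_self measurable_fst.aemeasurable,
    covariance_self measurable_snd.aemeasurable, hfst, hsnd]
  ring

theorem hasGaussianLaw_gaussianReal_prod (a b c d : ℝ) :
    HasGaussianLaw (fun p : ℝ × ℝ => (a * p.1 + b * p.2, c * p.1 + d * p.2))
      ((gaussianReal 0 1).prod (gaussianReal 0 1)) :=
  IsGaussian.hasGaussianLaw_id.map_fun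
    ((a • ContinuousLinearMap.fst ℝ ℝ ℝ + b • ContinuousLinearMap.snd ℝ ℝ ℝ).prod
      (c • ContinuousLinearMap.fst ℝ ℝ ℝ + d • ContinuousLinearMap.snd ℝ ℝ ℝ))

theorem measure_mul_neg_of_hasGaussianLaw {Ω : Type*} [MeasurableSpace Ω] {P : Measure Ω}
    {U V : Ω → ℝ} (h : HasGaussianLaw (fun ω => (U ω, V ω)) P) (hU : ∫ ω, U ω ∂P = 0)
    (hV : ∫ ω, V ω ∂P = 0) {σ τ α : ℝ} (hσ : 0 < σ) (hτ : 0 < τ) (h0 : 0 ≤ α) (hπ : α ≤ Real.pi)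
    (hvarU : Var[U; P] = σ ^ 2) (hvarV : Var[V; P] = τ ^ 2)
    (hcov : cov[U, V; P] = σ * τ * Real.cos α) :
    P {ω | U ω * V ω < 0} = ENNReal.ofReal (α / Real.pi) := by
  have hlaw : P.map (fun ω => (U ω, V ω)) = ((gaussianReal 0 1).prod (gaussianReal 0 1)).map
      fun p => (σ * p.1 + 0 * p.2, τ * Real.cos α * p.1 + τ * Real.sin α * p.2) := by
    refine map_prodMk_eq_of_hasGaussianLaw h (hasGaussianLaw_gaussianReal_prod _ _ _ _)
      (hU.trans (integral_gaussianReal_prod _ _).symm)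
      (hV.trans (integral_gaussianReal_prod _ _).symm) ?_ ?_ ?_
    · rw [hvarU, ← covariance_self (by fun_prop), covariance_gaussianReal_prod]
      ring
    · rw [hvarV, ← covariance_self (by fun_prop), covariance_gaussianReal_prod]
      linear_combination (-τ ^ 2) * Real.sin_sq_add_cos_sq α
    · rw [hcov, covariance_gaussianReal_prod]
      ring
  have hneg : MeasurableSet {p : ℝ × ℝ | p.1 * p.2 < 0} :=
    measurableSet_lt (measurable_fst.mul measurable_snd) measurable_const
  calc P {ω | U ω * V ω < 0} = P.map (fun ω => (U ω, V ω)) {p | p.1 * p.2 < 0} :=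
        (Measure.map_apply_of_aemeasurable h.aemeasurable hneg).symm
    _ = (gaussianReal 0 1).prod (gaussianReal 0 1)
          {p | p.1 * (Real.cos α * p.1 + Real.sin α * p.2) < 0} := by
        rw [hlaw, Measure.map_apply (by fun_prop) hneg]
        congr 1
        ext p
        have : (σ * p.1 + 0 * p.2) * (τ * Real.cos α * p.1 + τ * Real.sin α * p.2) =
          (σ * τ) * (p.1 * (Real.cos α * p.1 + Real.sin α * p.2)) := by ring
        simp only [Set.mem_preimage, Set.mem_ofPred_eq, this, ← smul_eq_mul (σ * τ),
          smul_neg_iff_of_pos_left (mul_pos hσ hτ)]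
    _ = ENNReal.ofReal (α / Real.pi) := gaussianReal_prod_mul_neg h0 hπ

/-! ### The grid asymptotics -/

theorem sinc_arccos_mul {δ : ℝ} (m : ℕ) (hδ : δ ∈ Set.Ioo 0 Real.pi) :
    Real.sinc (Real.arccos (Real.cos δ ^ m)) * (Real.arccos (Real.cos δ ^ m) / δ) =
      Real.sinc δ * √(∑ i ∈ Finset.range m, (Real.cos δ ^ 2) ^ i) := by
  have hsin : 0 ≤ Real.sin δ := Real.sin_nonneg_of_nonneg_of_le_pi hδ.1.le hδ.2.le
  have hmul : ∀ x : ℝ, Real.sinc x * x = Real.sin x := by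
    intro x
    rcases eq_or_ne x 0 with rfl | hx
    · rw [mul_zero, Real.sin_zero]
    · rw [Real.sinc_of_ne_zero hx, div_mul_cancel₀ _ hx]
  have hgeom : 1 - (Real.cos δ ^ m) ^ 2 =
      Real.sin δ ^ 2 * ∑ i ∈ Finset.range m, (Real.cos δ ^ 2) ^ i := by
    rw [Real.sin_sq, mul_neg_geom_sum, pow_right_comm]
  rw [← mul_div_assoc, hmul, Real.sin_arccos, hgeom, Real.sqrt_mul (sq_nonneg _),
    Real.sqrt_sq hsin, Real.sinc_of_ne_zero hδ.1.ne', div_mul_eq_mul_div]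

theorem tendsto_arccos_cos_pow_div (m : ℕ) :
    Tendsto (fun δ => Real.arccos (Real.cos δ ^ m) / δ) (𝓝[>] 0) (𝓝 √m) := by
  have hsinc : Tendsto (fun δ : ℝ => Real.sinc (Real.arccos (Real.cos δ ^ m))) (𝓝[>] 0) (𝓝 1) := by
    have h : Continuous fun δ : ℝ => Real.sinc (Real.arccos (Real.cos δ ^ m)) := by fun_prop
    simpa using h.tendsto 0 |>.mono_left nhdsWithin_le_nhds
  have hgeom : Tendsto (fun δ : ℝ =>
      Real.sinc δ * √(∑ i ∈ Finset.range m, (Real.cos δ ^ 2) ^ i)) (𝓝[>] 0) (𝓝 √m) := by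
    have h : Continuous fun δ : ℝ =>
      Real.sinc δ * √(∑ i ∈ Finset.range m, (Real.cos δ ^ 2) ^ i) := by fun_prop
    simpa using h.tendsto 0 |>.mono_left nhdsWithin_le_nhds
  have hquot := hgeom.div hsinc one_ne_zero
  rw [div_one] at hquot
  refine hquot.congr' ?_
  filter_upwards [Ioo_mem_nhdsGT Real.pi_pos, hsinc.eventually_ne one_ne_zero]
    with δ hδ hne
  rw [Pi.div_apply, ← sinc_arccos_mul m hδ, mul_div_cancel_left₀ _ hne]

theorem tendsto_mul_arccos_cos_pow (m : ℕ) :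
    Tendsto (fun M : ℕ => M * (Real.arccos (Real.cos (Real.pi / (M + 1)) ^ m) / Real.pi))
      atTop (𝓝 √m) := by
  have hδ : Tendsto (fun M : ℕ => Real.pi / ((M : ℝ) + 1)) atTop (𝓝[>] 0) := by
    refine tendsto_nhdsWithin_iff.2
      ⟨?_, Eventually.of_forall fun M => div_pos Real.pi_pos M.cast_add_one_pos⟩
    simpa only [mul_one_div, mul_zero] using
      tendsto_one_div_add_atTop_nhds_zero_nat.const_mul Real.pi
  have h := (tendsto_natCast_div_add_atTop (1 : ℝ)).mul ((tendsto_arccos_cos_pow_div m).comp hδ)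
  rw [one_mul] at h
  refine h.congr fun M => ?_
  simp only [Function.comp_apply]
  field_simp

/-! ### Measurability of the number of zeros -/

theorem natCast_le_encard_iff {α : Type*} {S : Set α} {k : ℕ} :
    (k : ℕ∞) ≤ S.encard ↔ ∃ x : Fin k → α, Function.Injective x ∧ ∀ i, x i ∈ S := by
  constructor
  · intro h
    obtain ⟨T, hTS, hT⟩ := Set.exists_subset_encard_eq h
    have := (Set.finite_of_encard_eq_coe hT).fintype
    have hcard : Fintype.card T = k := by
      rw [← Nat.card_eq_fintype_card, Nat.card_coe_set_eq, Set.ncard, hT, ENat.toNat_natCast]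
    let e := Fintype.equivFinOfCardEq hcard
    exact ⟨fun i => e.symm i, Subtype.val_injective.comp e.symm.injective,
      fun i => hTS (e.symm i).2⟩
  · rintro ⟨x, hx, hxS⟩
    calc (k : ℕ∞) = (Set.range x).encard := by
          rw [← Set.image_univ, hx.encard_image, Set.encard_univ, ENat.card_eq_coe_fintype_card,
            Fintype.card_fin]
      _ ≤ S.encard := Set.encard_le_encard (Set.range_subset_iff.2 hxS)

theorem isOpen_setOf_injective {ι X : Type*} [Finite ι] [TopologicalSpace X] [T2Space X] :
    IsOpen {x : ι → X | Function.Injective x} := by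
  simp only [Function.injective_iff_pairwise_ne, Pairwise, Set.ofPred_forall]
  exact isOpen_iInter_of_finite fun i => isOpen_iInter_of_finite fun j =>
    isOpen_iInter_of_finite fun _ => isOpen_ne_fun (continuous_apply i) (continuous_apply j)

theorem isSigmaCompact_of_isOpen {X : Type*} [TopologicalSpace X]
    [TopologicalSpace.PseudoMetrizableSpace X] [SigmaCompactSpace X] {U : Set X} (hU : IsOpen U) :
    IsSigmaCompact U := by
  let := TopologicalSpace.pseudoMetrizableSpacePseudoMetric X
  obtain ⟨F, hF, -, rfl, -⟩ := hU.exists_iUnion_isClosed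
  exact isSigmaCompact_iUnion _ fun n =>
    isSigmaCompact_univ.of_isClosed_subset (hF n) (Set.subset_univ _)

theorem measurableSet_setOf_exists_mem {Ω Y : Type*} [TopologicalSpace Ω] [MeasurableSpace Ω]
    [OpensMeasurableSpace Ω] [TopologicalSpace Y] {C : Set (Y × Ω)} (hC : IsClosed C) {K : Set Y}
    (hK : IsSigmaCompact K) : MeasurableSet {ω | ∃ y ∈ K, (y, ω) ∈ C} := by
  obtain ⟨L, hL, rfl⟩ := hK
  have hproj : {ω | ∃ y ∈ ⋃ n, L n, (y, ω) ∈ C} =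
      ⋃ n, Prod.snd '' {p : L n × Ω | (p.1.1, p.2) ∈ C} := by
    ext ω
    simp only [Set.mem_iUnion, Set.mem_ofPred_eq, Set.mem_image, Prod.exists, Subtype.exists,
      exists_eq_right, exists_prop]
    rw [exists_comm]
    simp only [exists_and_right]
  rw [hproj]
  refine MeasurableSet.iUnion fun n => IsClosed.measurableSet ?_
  have := isCompact_iff_compactSpace.1 (hL n)
  exact isClosedMap_snd_of_compactSpace _ (hC.preimage (by fun_prop))

theorem measurable_encard_zeros {Ω X Y : Type*} [TopologicalSpace Ω] [MeasurableSpace Ω]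
    [OpensMeasurableSpace Ω] [TopologicalSpace X] [TopologicalSpace.MetrizableSpace X]
    [SigmaCompactSpace X] [TopologicalSpace Y] [T1Space Y] [Zero Y] {f : Ω → X → Y}
    (hf : Continuous fun p : Ω × X => f p.1 p.2) :
    Measurable fun ω => {x | f ω x = 0}.encard := by
  have hnat : ∀ k : ℕ, MeasurableSet {ω | (k : ℕ∞) ≤ {x | f ω x = 0}.encard} := by
    intro k
    have hC : IsClosed {p : (Fin k → X) × Ω | ∀ i, f p.2 (p.1 i) = 0} := by
      simp only [Set.ofPred_forall]
      exact isClosed_iInter fun i => isClosed_singleton.preimage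
        (hf.comp (continuous_snd.prodMk ((continuous_apply i).comp continuous_fst)))
    simp only [natCast_le_encard_iff]
    exact measurableSet_setOf_exists_mem hC (isSigmaCompact_of_isOpen isOpen_setOf_injective)
  have : BorelSpace ℕ∞ := ⟨borel_eq_top_of_countable.symm⟩
  refine measurable_of_Ici fun k => ?_
  cases k with
  | coe k => exact hnat k
  | top =>
    have htop : (fun ω => {x | f ω x = 0}.encard) ⁻¹' Set.Ici ⊤ =
        ⋂ k : ℕ, {ω | (k : ℕ∞) ≤ {x | f ω x = 0}.encard} := by
      ext ω
      simp only [Set.mem_preimage, Set.mem_Ici, top_le_iff, ENat.eq_top_iff_forall_ge,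
        Set.mem_iInter, Set.mem_ofPred_eq]
    exact htop ▸ MeasurableSet.iInter hnat

theorem measurable_ncard_zeros {Ω X Y : Type*} [TopologicalSpace Ω] [MeasurableSpace Ω]
    [OpensMeasurableSpace Ω] [TopologicalSpace X] [TopologicalSpace.MetrizableSpace X]
    [SigmaCompactSpace X] [TopologicalSpace Y] [T1Space Y] [Zero Y] {f : Ω → X → Y}
    (hf : Continuous fun p : Ω × X => f p.1 p.2) :
    Measurable fun ω => {x | f ω x = 0}.ncard :=
  Measurable.of_discrete.comp (measurable_encard_zeros hf)

/-! ### Sign changes -/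

/-- The number of strict sign changes of `f` between consecutive points of the list
`r 0, …, r M`; a zero value at a sample point never contributes. -/
noncomputable def signChanges {M : ℕ} (f : ℝ → ℝ) (r : Fin (M + 1) → ℝ) : ℕ :=
  {i : Fin M | f (r i.castSucc) * f (r i.succ) < 0}.ncard

theorem signChanges_le {M : ℕ} (f : ℝ → ℝ) (r : Fin (M + 1) → ℝ) : signChanges f r ≤ M :=
  (Set.ncard_le_card _).trans_eq (Nat.card_fin M)

theorem exists_mem_Ioo_eq_zero_of_mul_neg {f : ℝ → ℝ} (hf : Continuous f) {a b : ℝ} (hab : a ≤ b)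
    (h : f a * f b < 0) : ∃ x ∈ Set.Ioo a b, f x = 0 := by
  rcases mul_neg_iff.1 h with ⟨ha, hb⟩ | ⟨ha, hb⟩
  · exact intermediate_value_Ioo' hab hf.continuousOn ⟨hb, ha⟩
  · exact intermediate_value_Ioo hab hf.continuousOn ⟨ha, hb⟩

theorem signChanges_le_ncard {M : ℕ} {f : ℝ → ℝ} (hf : Continuous f)
    (hfin : {x | f x = 0}.Finite) {r : Fin (M + 1) → ℝ} (hr : StrictMono r) :
    signChanges f r ≤ {x | f x = 0}.ncard := by
  have hzero : ∀ i : Fin M, f (r i.castSucc) * f (r i.succ) < 0 →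
      ∃ x ∈ Set.Ioo (r i.castSucc) (r i.succ), f x = 0 := fun i =>
    exists_mem_Ioo_eq_zero_of_mul_neg hf (hr i.castSucc_lt_succ).le
  choose! z hz hz0 using hzero
  refine Set.ncard_le_ncard_of_injOn z hz0 (StrictMonoOn.injOn fun i hi j hj hij => ?_) hfin
  calc z i < r i.succ := (hz i hi).2
    _ ≤ r j.castSucc := hr.monotone (Fin.succ_le_castSucc_iff.2 hij)
    _ < z j := (hz j hj).1

theorem ncard_setOf_eval_eq_zero_le (p : ℝ[X]) : {x | p.eval x = 0}.ncard ≤ p.natDegree := by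
  rcases eq_or_ne p 0 with rfl | hp
  · simp [Set.infinite_univ.ncard]
  · calc {x | p.eval x = 0}.ncard = p.roots.toFinset.card := by
          rw [← Set.ncard_coe_finset]
          congr 1
          ext x
          simp [hp]
      _ ≤ p.natDegree := (Multiset.toFinset_card_le _).trans p.card_roots'

theorem signChanges_eval_le_ncard {M : ℕ} (p : ℝ[X]) {r : Fin (M + 1) → ℝ} (hr : StrictMono r) :
    signChanges (fun x => p.eval x) r ≤ {x | p.eval x = 0}.ncard := by
  rcases eq_or_ne p 0 with rfl | hp
  · simp [signChanges]
  · exact signChanges_le_ncard p.continuous (finite_setOfPred_isRoot hp) hr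

theorem eventually_signChanges_le {ι : Type*} {l : Filter ι} {M : ℕ} {F : ι → ℝ → ℝ} {f : ℝ → ℝ}
    {r : Fin (M + 1) → ℝ} (hF : ∀ x, Tendsto (fun e => F e x) l (𝓝 (f x))) :
    ∀ᶠ e in l, signChanges f r ≤ signChanges (F e) r := by
  have hstable : ∀ i : Fin M, f (r i.castSucc) * f (r i.succ) < 0 →
      ∀ᶠ e in l, F e (r i.castSucc) * F e (r i.succ) < 0 :=
    fun i hi => ((hF _).mul (hF _)).eventually_lt_const hi
  have hall : ∀ᶠ e in l, ∀ i : Fin M, f (r i.castSucc) * f (r i.succ) < 0 →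
      F e (r i.castSucc) * F e (r i.succ) < 0 := by
    simpa only [eventually_all, eventually_imp_distrib_left] using hstable
  exact hall.mono fun e he => Set.ncard_le_ncard he

theorem natCast_signChanges_eq_sum_indicator {Ω : Type*} {M : ℕ} (f : Ω → ℝ → ℝ)
    (r : Fin (M + 1) → ℝ) (ω : Ω) :
    (signChanges (f ω) r : ℝ) =
      ∑ i : Fin M, {ω | f ω (r i.castSucc) * f ω (r i.succ) < 0}.indicator 1 ω := by
  classical
  simp only [signChanges, Set.indicator_apply, Set.mem_ofPred_eq, Pi.one_apply,
    Set.ncard_eq_toFinset_card', Set.toFinset_ofPred, Finset.natCast_card_filter]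

section Integral

variable {Ω : Type*} [MeasurableSpace Ω] {M : ℕ} {f : Ω → ℝ → ℝ}

theorem measurableSet_mul_neg (hf : ∀ x, Measurable fun ω => f ω x) (x y : ℝ) :
    MeasurableSet {ω | f ω x * f ω y < 0} :=
  measurableSet_lt ((hf x).mul (hf y)) measurable_const

theorem measurable_natCast_signChanges (hf : ∀ x, Measurable fun ω => f ω x)
    (r : Fin (M + 1) → ℝ) : Measurable fun ω => (signChanges (f ω) r : ℝ) := by
  simp only [natCast_signChanges_eq_sum_indicator]
  exact Finset.measurable_fun_sum _ fun i _ =>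
    measurable_one.indicator (measurableSet_mul_neg hf _ _)

theorem integral_signChanges {P : Measure Ω} [IsFiniteMeasure P]
    (hf : ∀ x, Measurable fun ω => f ω x) (r : Fin (M + 1) → ℝ) :
    ∫ ω, (signChanges (f ω) r : ℝ) ∂P =
      ∑ i : Fin M, P.real {ω | f ω (r i.castSucc) * f ω (r i.succ) < 0} := by
  simp only [natCast_signChanges_eq_sum_indicator]
  rw [integral_finsetSum]
  · exact Finset.sum_congr rfl fun i _ => integral_indicator_one (measurableSet_mul_neg hf _ _)
  · exact fun i _ => (integrable_const (1 : ℝ)).indicator (measurableSet_mul_neg hf _ _)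

theorem integrable_natCast_of_le {g : Ω → ℕ} {P : Measure Ω} [IsFiniteMeasure P] (hg : Measurable g)
    {d : ℕ} (hd : ∀ ω, g ω ≤ d) : Integrable (fun ω => (g ω : ℝ)) P :=
  Integrable.of_bound (by fun_prop) (d : ℝ) (ae_of_all _ fun ω => by simpa using hd ω)

theorem integrable_signChanges {P : Measure Ω} [IsFiniteMeasure P]
    (hf : ∀ x, Measurable fun ω => f ω x) (r : Fin (M + 1) → ℝ) :
    Integrable (fun ω => (signChanges (f ω) r : ℝ)) P :=
  Integrable.of_bound (measurable_natCast_signChanges hf r).aestronglyMeasurable M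
    (ae_of_all _ fun ω => by simpa using signChanges_le (f ω) r)

theorem eventually_lt_integral_signChanges {ι : Type*} {l : Filter ι} [l.IsCountablyGenerated]
    {P : Measure Ω} [IsFiniteMeasure P] {F : ι → Ω → ℝ → ℝ} {r : Fin (M + 1) → ℝ}
    (hFm : ∀ e x, Measurable fun ω => F e ω x) (hf : ∀ x, Measurable fun ω => f ω x)
    (hF : ∀ ω x, Tendsto (fun e => F e ω x) l (𝓝 (f ω x))) {a : ℝ}
    (ha : a < ∫ ω, (signChanges (f ω) r : ℝ) ∂P) :
    ∀ᶠ e in l, a < ∫ ω, (signChanges (F e ω) r : ℝ) ∂P := by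
  have hmin : Tendsto
      (fun e => ∫ ω, min (signChanges (F e ω) r : ℝ) (signChanges (f ω) r) ∂P) l
      (𝓝 (∫ ω, (signChanges (f ω) r : ℝ) ∂P)) := by
    refine tendsto_integral_filter_of_dominated_convergence (fun _ => (M : ℝ))
      (Eventually.of_forall fun e => ((measurable_natCast_signChanges (hFm e) r).min
        (measurable_natCast_signChanges hf r)).aestronglyMeasurable)
      (Eventually.of_forall fun e => ae_of_all _ fun ω => ?_) (integrable_const _)
      (ae_of_all _ fun ω => tendsto_const_nhds.congr' ?_)
    · rw [Real.norm_of_nonneg (by positivity)]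
      exact (min_le_right _ _).trans (mod_cast signChanges_le (f ω) r)
    · filter_upwards [eventually_signChanges_le (r := r) (hF ω)] with e he
      exact (min_eq_right (mod_cast he)).symm
  filter_upwards [hmin.eventually_const_lt ha] with e he
  exact he.trans_le (integral_mono
    ((integrable_signChanges (hFm e) r).inf (integrable_signChanges hf r))
    (integrable_signChanges (hFm e) r) fun ω => min_le_left _ _)

end Integral

theorem integral_signChanges_le_integral_ncard {Ω : Type*} [TopologicalSpace Ω]
    [MeasurableSpace Ω] [OpensMeasurableSpace Ω] {P : Measure Ω} [IsFiniteMeasure P]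
    {p : Ω → ℝ[X]} {d : ℕ} (hp : Continuous fun z : Ω × ℝ => (p z.1).eval z.2)
    (hd : ∀ ω, (p ω).natDegree ≤ d) {M : ℕ} {r : Fin (M + 1) → ℝ} (hr : StrictMono r) :
    ∫ ω, (signChanges (fun x => (p ω).eval x) r : ℝ) ∂P ≤
      ∫ ω, ({x | (p ω).eval x = 0}.ncard : ℝ) ∂P :=
  integral_mono
    (integrable_signChanges (fun x => (hp.comp (Continuous.prodMk_left x)).measurable) r)
    (integrable_natCast_of_le (measurable_ncard_zeros hp) fun ω =>
      (ncard_setOf_eval_eq_zero_le (p ω)).trans (hd ω))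
    fun ω => Nat.cast_le.2 (signChanges_eval_le_ncard (p ω) hr)

/-! ### Kostlan polynomials -/

section PiGaussian

variable {ι : Type*} [Fintype ι] (v : ι → ℝ≥0) (u w : ι → ℝ)

theorem hasGaussianLaw_sum_mul_pair_pi_gaussianReal :
    HasGaussianLaw (fun a : ι → ℝ => (∑ k, a k * u k, ∑ k, a k * w k))
      (Measure.pi fun k => gaussianReal 0 (v k)) := by
  let pairing : (ι → ℝ) → (ι → ℝ) →L[ℝ] ℝ := fun u => ∑ k, u k • ContinuousLinearMap.proj k
  have hgauss : HasGaussianLaw (fun a : ι → ℝ => a) (Measure.pi fun k => gaussianReal 0 (v k)) :=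
    (iIndepFun_pi (X := fun _ : ι => id) fun _ => aemeasurable_id).hasGaussianLaw fun k =>
      (measurePreserving_eval (fun k => gaussianReal 0 (v k)) k).hasLaw.hasGaussianLaw
  refine (hgauss.map_fun ((pairing u).prod (pairing w))).congr (ae_of_all _ fun a => ?_)
  simp [pairing, mul_comm]

theorem memLp_eval_pi_gaussianReal (k : ι) :
    MemLp (fun a : ι → ℝ => a k) 2 (Measure.pi fun k => gaussianReal 0 (v k)) :=
  (memLp_id_gaussianReal 2).comp_measurePreserving (measurePreserving_eval _ k)

theorem integral_sum_mul_pi_gaussianReal :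
    ∫ a : ι → ℝ, ∑ k, a k * u k ∂(Measure.pi fun k => gaussianReal 0 (v k)) = 0 := by
  rw [integral_finsetSum _ fun k _ =>
    ((memLp_eval_pi_gaussianReal v k).integrable one_le_two).mul_const _]
  refine Finset.sum_eq_zero fun k _ => ?_
  rw [integral_mul_const, integral_comp_eval (μ := fun k => gaussianReal 0 (v k)) (f := fun x => x)
    aestronglyMeasurable_id,
    integral_id_gaussianReal, zero_mul]

theorem covariance_eval_pi_gaussianReal [DecidableEq ι] (k l : ι) :
    cov[fun a : ι → ℝ => a k, fun a => a l; Measure.pi fun k => gaussianReal 0 (v k)] =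
      if k = l then (v k : ℝ) else 0 := by
  split_ifs with h
  · subst h
    have hmap := (measurePreserving_eval (fun k => gaussianReal 0 (v k)) k).map_eq
    rw [covariance_self (measurable_pi_apply k).aemeasurable,
      ← variance_id_map (measurable_pi_apply k).aemeasurable]
    exact hmap ▸ variance_id_gaussianReal
  · exact ((iIndepFun_pi (X := fun _ : ι => id) fun _ => aemeasurable_id).indepFun
      h).covariance_eq_zero (memLp_eval_pi_gaussianReal v k) (memLp_eval_pi_gaussianReal v l)

theorem covariance_sum_mul_pi_gaussianReal :
    cov[fun a : ι → ℝ => ∑ k, a k * u k, fun a => ∑ k, a k * w k;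
      Measure.pi fun k => gaussianReal 0 (v k)] = ∑ k, v k * (u k * w k) := by
  classical
  rw [covariance_fun_sum_fun_sum (fun k => (memLp_eval_pi_gaussianReal v k).mul_const _)
    fun k => (memLp_eval_pi_gaussianReal v k).mul_const _]
  simp only [covariance_mul_const_left, covariance_mul_const_right,
    covariance_eval_pi_gaussianReal, ite_mul, zero_mul, Finset.sum_ite_eq, Finset.mem_univ, if_true]
  exact Finset.sum_congr rfl fun k _ => by ring

end PiGaussian

/-- The law of the coefficient vector of the Kostlan random polynomial `∑ a_k x ^ k` of degree `m`:
the `a_k` are independent, centred and Gaussian, of variance `v` times `m.choose k`. -/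
noncomputable def kostlanMeasure (m : ℕ) (v : ℝ≥0) : Measure (Fin (m + 1) → ℝ) :=
  Measure.pi fun k => gaussianReal 0 (v * m.choose k)

instance (m : ℕ) (v : ℝ≥0) : IsProbabilityMeasure (kostlanMeasure m v) :=
  inferInstanceAs (IsProbabilityMeasure (Measure.pi _))

theorem covariance_kostlan (m : ℕ) (v : ℝ≥0) (x y : ℝ) :
    cov[fun a : Fin (m + 1) → ℝ => ∑ k, a k * x ^ (k : ℕ),
      fun a => ∑ k : Fin (m + 1), a k * y ^ (k : ℕ); kostlanMeasure m v] = v * (1 + x * y) ^ m := by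
  rw [kostlanMeasure, covariance_sum_mul_pi_gaussianReal, add_comm (1 : ℝ), add_pow,
    Finset.sum_range, Finset.mul_sum]
  refine Finset.sum_congr rfl fun k _ => ?_
  push_cast
  ring

theorem one_add_tan_mul_tan {s t : ℝ} (hs : Real.cos s ≠ 0) (ht : Real.cos t ≠ 0) :
    1 + Real.tan s * Real.tan t = Real.cos (t - s) / (Real.cos s * Real.cos t) := by
  rw [Real.cos_sub, Real.tan_eq_sin_div_cos, Real.tan_eq_sin_div_cos]
  field_simp

theorem covariance_kostlan_tan (m : ℕ) (v : ℝ≥0) {s t : ℝ} (hs : Real.cos s ≠ 0)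
    (ht : Real.cos t ≠ 0) :
    cov[fun a : Fin (m + 1) → ℝ => ∑ k, a k * Real.tan s ^ (k : ℕ),
      fun a => ∑ k : Fin (m + 1), a k * Real.tan t ^ (k : ℕ); kostlanMeasure m v] =
        √v / Real.cos s ^ m * (√v / Real.cos t ^ m) * Real.cos (t - s) ^ m := by
  rw [covariance_kostlan, one_add_tan_mul_tan hs ht, div_pow, mul_pow]
  field_simp
  rw [Real.sq_sqrt v.coe_nonneg, mul_comm]

theorem kostlanMeasure_mul_neg (m : ℕ) {v : ℝ≥0} (hv : 0 < v) {s t : ℝ}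
    (hs : s ∈ Set.Ioo (-(Real.pi / 2)) (Real.pi / 2))
    (ht : t ∈ Set.Ioo (-(Real.pi / 2)) (Real.pi / 2)) :
    kostlanMeasure m v {a | (∑ k, a k * Real.tan s ^ (k : ℕ)) *
        (∑ k, a k * Real.tan t ^ (k : ℕ)) < 0} =
      ENNReal.ofReal (Real.arccos (Real.cos (t - s) ^ m) / Real.pi) := by
  have hcs := Real.cos_pos_of_mem_Ioo hs
  have hct := Real.cos_pos_of_mem_Ioo ht
  have hmeas (x : ℝ) : Measurable fun a : Fin (m + 1) → ℝ => ∑ k, a k * x ^ (k : ℕ) := by fun_prop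
  have hcorr : |Real.cos (t - s) ^ m| ≤ 1 := by
    rw [abs_pow]
    exact pow_le_one₀ (abs_nonneg _) (Real.abs_cos_le_one _)
  refine measure_mul_neg_of_hasGaussianLaw (P := kostlanMeasure m v) (σ := √v / Real.cos s ^ m)
    (τ := √v / Real.cos t ^ m)
    (hasGaussianLaw_sum_mul_pair_pi_gaussianReal _ _ _) (integral_sum_mul_pi_gaussianReal _ _)
    (integral_sum_mul_pi_gaussianReal _ _) (by positivity) (by positivity)
    (Real.arccos_nonneg _) (Real.arccos_le_pi _) ?_ ?_ ?_
  · rw [← covariance_self (hmeas _).aemeasurable, covariance_kostlan_tan m v hcs.ne' hcs.ne',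
      sub_self, Real.cos_zero]
    ring
  · rw [← covariance_self (hmeas _).aemeasurable, covariance_kostlan_tan m v hct.ne' hct.ne',
      sub_self, Real.cos_zero]
    ring
  · rw [covariance_kostlan_tan m v hcs.ne' hct.ne',
      Real.cos_arccos (abs_le.1 hcorr).1 (abs_le.1 hcorr).2]

/-- The midpoints of the `M + 1` subintervals of equal length of `(-π / 2, π / 2)`; their tangents
are the sample points at which sign changes of a Kostlan polynomial are counted. -/
noncomputable def gridAngle (M : ℕ) (i : Fin (M + 1)) : ℝ :=
  ((i : ℕ) + 1 / 2) * (Real.pi / (M + 1)) - Real.pi / 2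

theorem gridAngle_mem_Ioo (M : ℕ) (i : Fin (M + 1)) :
    gridAngle M i ∈ Set.Ioo (-(Real.pi / 2)) (Real.pi / 2) := by
  have hi : ((i : ℕ) : ℝ) + 1 ≤ M + 1 := mod_cast i.is_lt
  have hpos : 0 < Real.pi / (M + 1) := by positivity
  have hlt : ((i : ℕ) + 1 / 2) * (Real.pi / (M + 1)) < (M + 1) * (Real.pi / (M + 1)) :=
    mul_lt_mul_of_pos_right (by linarith) hpos
  have hlower : 0 < ((i : ℕ) + 1 / 2) * (Real.pi / (M + 1)) := by positivity
  rw [mul_div_cancel₀ _ (by positivity)] at hlt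
  constructor <;> unfold gridAngle <;> linarith

theorem gridAngle_succ_sub_castSucc {M : ℕ} (i : Fin M) :
    gridAngle M i.succ - gridAngle M i.castSucc = Real.pi / (M + 1) := by
  simp only [gridAngle, Fin.val_succ, Fin.val_castSucc]
  push_cast
  ring

theorem strictMono_tan_gridAngle (M : ℕ) : StrictMono fun i => Real.tan (gridAngle M i) := by
  refine Fin.strictMono_iff_lt_succ.2 fun i => Real.strictMonoOn_tan (gridAngle_mem_Ioo M _)
    (gridAngle_mem_Ioo M _) (sub_pos.1 ?_)
  rw [gridAngle_succ_sub_castSucc]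
  positivity

theorem integral_signChanges_kostlan (m : ℕ) {v : ℝ≥0} (hv : 0 < v) (M : ℕ) :
    ∫ a, (signChanges (fun x => ∑ k, a k * x ^ (k : ℕ)) fun i => Real.tan (gridAngle M i) : ℝ)
      ∂kostlanMeasure m v = M * (Real.arccos (Real.cos (Real.pi / (M + 1)) ^ m) / Real.pi) := by
  rw [integral_signChanges fun x => by fun_prop]
  have hprob : ∀ i : Fin M, (kostlanMeasure m v).real
      {a | (∑ k, a k * Real.tan (gridAngle M i.castSucc) ^ (k : ℕ)) *
        (∑ k, a k * Real.tan (gridAngle M i.succ) ^ (k : ℕ)) < 0} =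
      Real.arccos (Real.cos (Real.pi / (M + 1)) ^ m) / Real.pi := fun i => by
    rw [measureReal_def, kostlanMeasure_mul_neg m hv (gridAngle_mem_Ioo M _)
      (gridAngle_mem_Ioo M _), gridAngle_succ_sub_castSucc, ENNReal.toReal_ofReal
        (div_nonneg (Real.arccos_nonneg _) Real.pi_pos.le)]
  rw [Finset.sum_congr rfl fun i _ => hprob i, Finset.sum_const, Finset.card_univ,
    Fintype.card_fin, nsmul_eq_mul]

theorem eval_ofFn {n : ℕ} (a : Fin n → ℝ) (x : ℝ) :
    (Polynomial.ofFn n a).eval x = ∑ k, a k * x ^ (k : ℕ) := by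
  simp only [Polynomial.ofFn_eq_sum_monomial, eval_finsetSum, eval_monomial]

theorem integral_signChanges_le_integral_ncard_kostlan (m : ℕ) (v : ℝ≥0) (q : ℝ[X]) (ε : ℝ)
    {M : ℕ} {r : Fin (M + 1) → ℝ} (hr : StrictMono r) :
    ∫ a, (signChanges (fun x => ε * q.eval x + ∑ k, a k * x ^ (k : ℕ)) r : ℝ)
        ∂kostlanMeasure m v ≤
      ∫ a, ({x | ε * q.eval x + ∑ k, a k * x ^ (k : ℕ) = 0}.ncard : ℝ) ∂kostlanMeasure m v := by
  have heval : ∀ (a : Fin (m + 1) → ℝ) (x : ℝ),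
      ε * q.eval x + ∑ k, a k * x ^ (k : ℕ) = (C ε * q + Polynomial.ofFn (m + 1) a).eval x :=
    fun a x => by rw [eval_add, eval_C_mul, eval_ofFn]
  have hcont : Continuous fun z : (Fin (m + 1) → ℝ) × ℝ =>
      ε * q.eval z.2 + ∑ k, z.1 k * z.2 ^ (k : ℕ) := by fun_prop
  simp only [heval] at hcont ⊢
  exact integral_signChanges_le_integral_ncard hcont
    (fun a => natDegree_add_le_of_degree_le ((natDegree_C_mul_le ε q).trans (le_max_left _ m))
      ((Nat.le_of_lt_succ (Polynomial.ofFn_natDegree_lt m.succ_pos a)).trans (le_max_right _ _))) hr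

theorem eventually_lt_integral_ncard_kostlan (m : ℕ) {v : ℝ≥0} (hv : 0 < v) (q : ℝ[X]) {b : ℝ}
    (hb : b < √m) :
    ∀ᶠ ε in 𝓝 (0 : ℝ), b <
      ∫ a, ({x | ε * q.eval x + ∑ k, a k * x ^ (k : ℕ) = 0}.ncard : ℝ) ∂kostlanMeasure m v := by
  obtain ⟨M, hM⟩ := ((tendsto_mul_arccos_cos_pow m).eventually_const_lt hb).exists
  rw [← integral_signChanges_kostlan m hv M] at hM
  have hlim : ∀ (a : Fin (m + 1) → ℝ) (x : ℝ),
      Tendsto (fun ε => ε * q.eval x + ∑ k, a k * x ^ (k : ℕ)) (𝓝 0)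
        (𝓝 (∑ k, a k * x ^ (k : ℕ))) := fun a x =>
    Continuous.tendsto' (by fun_prop) _ _ (by rw [zero_mul, zero_add])
  filter_upwards [eventually_lt_integral_signChanges (fun ε x => by fun_prop)
    (fun x => by fun_prop) hlim hM] with ε hε
  exact hε.trans_le
    (integral_signChanges_le_integral_ncard_kostlan m v q ε (strictMono_tan_gridAngle M))

/-! ### Rotation of the coefficients -/

theorem measurePreserving_rotate_gaussianReal_prod (v : ℝ≥0) (φ : ℝ) :
    MeasurePreserving (fun p : ℝ × ℝ => p.1 * Real.cos φ - p.2 * Real.sin φ)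
      ((gaussianReal 0 v).prod (gaussianReal 0 v)) (gaussianReal 0 v) := by
  have hscale (b : ℝ) : MeasurePreserving (fun x => x * b) (gaussianReal 0 v)
      (gaussianReal 0 (.mk (b ^ 2) (sq_nonneg b) * v)) :=
    ⟨by fun_prop, by rw [gaussianReal_map_mul_const, mul_zero]⟩
  have hindep : IndepFun (fun p : ℝ × ℝ => p.1 * Real.cos φ) (fun p => p.2 * -Real.sin φ)
      ((gaussianReal 0 v).prod (gaussianReal 0 v)) :=
    indepFun_prod (hscale _).measurable (hscale _).measurable
  have hsum := gaussianReal_add_gaussianReal_of_indepFun hindep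
    ((hscale _).comp measurePreserving_fst).map_eq ((hscale _).comp measurePreserving_snd).map_eq
  have hvar : NNReal.mk (Real.cos φ ^ 2) (sq_nonneg _) * v +
      NNReal.mk ((-Real.sin φ) ^ 2) (sq_nonneg _) * v = v := by
    ext
    push_cast
    linear_combination (v : ℝ) * Real.sin_sq_add_cos_sq φ
  rw [hvar, add_zero] at hsum
  simp only [sub_eq_add_neg, ← mul_neg]
  exact ⟨by fun_prop, hsum⟩

theorem measurePreserving_rotate_kostlanMeasure (m : ℕ) (v : ℝ≥0) (φ : Fin (m + 1) → ℝ) :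
    MeasurePreserving
      (fun (c : Fin (m + 1) → ℝ × ℝ) k => (c k).1 * Real.cos (φ k) - (c k).2 * Real.sin (φ k))
      (Measure.pi fun k : Fin (m + 1) =>
        (gaussianReal 0 (v * m.choose k)).prod (gaussianReal 0 (v * m.choose k)))
      (kostlanMeasure m v) :=
  measurePreserving_pi _ _ fun k => measurePreserving_rotate_gaussianReal_prod _ (φ k)

theorem expected_zeros_on_line_general (q : ℝ[X]) (m : ℕ) (φ : Fin (m + 1) → ℝ) {v : ℝ≥0}
    (hv : 0 < v) {ε₀ : ℝ} (hε₀ : 0 < ε₀) :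
    ∃ ε₁ : ℝ, 0 < ε₁ ∧ ∀ ε : ℝ, |ε| ≤ ε₁ →
      √m - ε₀ ≤
        ∫ c : Fin (m + 1) → ℝ × ℝ,
          ({r : ℝ | ε * q.eval r + ∑ k : Fin (m + 1),
            ((c k).1 * Real.cos (φ k) - (c k).2 * Real.sin (φ k)) * r ^ (k : ℕ) = 0}.ncard : ℝ)
        ∂(Measure.pi fun k : Fin (m + 1) =>
            (gaussianReal 0 (v * m.choose k)).prod (gaussianReal 0 (v * m.choose k))) := by
  obtain ⟨ε₁, hε₁, hlt⟩ := Metric.nhds_basis_closedBall.eventually_iff.1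
    (eventually_lt_integral_ncard_kostlan m hv q (sub_lt_self √m hε₀))
  refine ⟨ε₁, hε₁, fun ε hε => ?_⟩
  have hmeas : Measurable fun a : Fin (m + 1) → ℝ =>
      ({x | ε * q.eval x + ∑ k, a k * x ^ (k : ℕ) = 0}.ncard : ℝ) :=
    measurable_from_nat.comp (measurable_ncard_zeros (by fun_prop))
  have hrotate := measurePreserving_rotate_kostlanMeasure m v φ
  rw [← integral_map hrotate.aemeasurable hmeas.aestronglyMeasurable, hrotate.map_eq]
  exact (hlt (mem_closedBall_zero_iff.2 hε)).le

/-- Fix `n > m ≥ 1`, `0 ≤ j ≤ n−1`, `θ_j = jπ/n`, and let `ν` be the product of the measures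
`N(0,(1/2)C(m,k)) ⊗ N(0,(1/2)C(m,k))` governing the coefficients `((a_k,b_k))_k`. For every
`ε₀ > 0` there exists `ε₁ > 0` such that for all `0 < ε ≤ ε₁`, the expected number of real
solutions `r` of `ε r^n + 2 Σ_k (−1)^j (a_k cos(kθ_j) − b_k sin(kθ_j)) r^k = 0` is at least
`√m − ε₀`. -/
theorem expected_zeros_on_line (n m : ℕ) (hm : 1 ≤ m) (hmn : m < n)
    (j : ℕ) (hj : j ≤ n - 1) (ε₀ : ℝ) (hε₀ : 0 < ε₀) :
    ∃ ε₁ : ℝ, 0 < ε₁ ∧ ∀ ε : ℝ, 0 < ε → ε ≤ ε₁ →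
      Real.sqrt m - ε₀ ≤
        ∫ c : Fin (m + 1) → ℝ × ℝ,
          (({r : ℝ | ε * r ^ n +
              2 * ∑ k : Fin (m + 1), (-1 : ℝ) ^ j *
                ((c k).1 * Real.cos ((k : ℕ) * ((j : ℝ) * Real.pi / n)) -
                  (c k).2 * Real.sin ((k : ℕ) * ((j : ℝ) * Real.pi / n))) * r ^ (k : ℕ)
              = 0}.ncard : ℝ))
        ∂(Measure.pi fun k : Fin (m + 1) =>
            (gaussianReal 0 ((m.choose k : ℝ≥0) / 2)).prod
              (gaussianReal 0 ((m.choose k : ℝ≥0) / 2))) := by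
  obtain ⟨ε₁, hε₁, hle⟩ := expected_zeros_on_line_general (C 2⁻¹ * X ^ n) m
    (fun k => (k : ℕ) * (j * Real.pi / n) + j * Real.pi) (v := 2⁻¹) (by norm_num) hε₀
  refine ⟨ε₁, hε₁, fun ε hε hεε₁ => ?_⟩
  convert hle ε ((abs_of_pos hε).trans_le hεε₁) using 6 with k k c
  · exact div_eq_inv_mul _ _
  · exact div_eq_inv_mul _ _
  · ext r
    simp only [Real.cos_add_nat_mul_pi, Real.sin_add_nat_mul_pi, mul_left_comm _ ((-1 : ℝ) ^ j),
      ← mul_sub, eval_C_mul, eval_X_pow]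
    constructor <;> intro hr <;> linarith
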